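/- Information–disturbance theorem (main theorem): For every attack E and every POVM X = (X_α)_{α ∈ A} on ℂ^M, Eve's information gain in the basis b is bounded by the Shannon entropy of Bob's conjugate-basis error distribution: I(A:E[X]|b) ≤ H(A⊕B|b̄). -/

import Mathlib

/-! The bound reduces to an entropic uncertainty relation for the Fourier transform on `𝔽₂^N`, used
once for each fine-grained outcome of Eve's measurement.

Write `X_α = B_α† B_α`. Then `2^{-N} p(α|i) = ∑_k 2^{-N} |W_{α,k}(i)|²`, where `k = (e, x)` ranges over
the errors `e` in basis `b` and the coordinates `x` of Eve's space, and
`W_{α,(e,x)}(i) = (B_α E_{i,i⊕e})_x`. Put `p_{α,k}(i) = 2^{-N}|W_{α,k}(i)|²` and let `q_{α,k}(c)` be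
`4^{-N}` times the squared modulus of the Fourier transform of `W_{α,k}` at `c`. Parseval's identity
gives `∑_{α,k} q_{α,k} = p̄` (`pbar_eq`, `sum_norm_sq_kraus`) and equality of the total masses of
`p_{α,k}` and `q_{α,k}`.

Let `η(x) = -x log₂ x` and `F(r) = ∑_i η(r_i) - η(∑_i r_i)` for nonnegative vectors `r`.

* `ent2_superadd`: `F` is superadditive; this is the log-sum inequality.
* `uncertainty`: `F(p_{α,k}) + F(q_{α,k}) ≥ N · mass(p_{α,k})`, the entropic (Hirschman, Maassen–Uffink)
  uncertainty relation. It follows by induction on `N` from the two-point case, the mixed entropy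
  terms being controlled by subadditivity of entropy. The two-point case reduces to
  `h₂(t) ≥ 4t(1-t)` for the binary entropy `h₂` (`four_mul_le_binEntropy`).

Since Alice's string is uniform, the information gain equals `N - ∑_α F(∑_k p_{α,k})`, hence it is at
most `N - ∑_{α,k} F(p_{α,k}) ≤ ∑_{α,k} F(q_{α,k}) ≤ F(p̄)`, and `F(p̄)` is the entropy of `p̄` because `p̄`
has total mass `1`.
-/

open scoped ComplexInnerProductSpace ComplexOrder
open Finset

namespace IDT

/-- N-bit strings. -/
abbrev Bits (N : ℕ) := Fin N → ZMod 2

/-- Bitwise dot product `i·k := ∑ n i_n k_n` (lifting bits to naturals). -/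
def bdot {N : ℕ} (i k : Bits N) : ℕ := ∑ n, (i n).val * (k n).val

/-- Eve's attack: unitarity condition on the family of vectors. -/
def Attack {N M : ℕ} (E : Bits N → Bits N → EuclideanSpace ℂ (Fin M)) : Prop :=
  ∀ i k : Bits N, (∑ j : Bits N, ⟪E i j, E k j⟫) = if i = k then 1 else 0

/-- Conjugate-basis vectors `Ē l s := 2^{-N} ∑_{i,j} (-1)^{s·j + i·l} E i j`. -/
noncomputable def Ebar {N M : ℕ} (E : Bits N → Bits N → EuclideanSpace ℂ (Fin M))
    (l s : Bits N) : EuclideanSpace ℂ (Fin M) :=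
  (2 ^ N : ℂ)⁻¹ • ∑ i : Bits N, ∑ j : Bits N, ((-1 : ℂ) ^ (bdot s j + bdot i l)) • E i j

/-- Error distribution of Bob's conjugate-basis outcome. -/
noncomputable def pbar {N M : ℕ} (E : Bits N → Bits N → EuclideanSpace ℂ (Fin M))
    (c : Bits N) : ℝ :=
  (2 ^ N : ℝ)⁻¹ * ∑ i : Bits N, ‖Ebar E i (i + c)‖ ^ 2

/-- `-x log₂ x` (with the convention `0 log₂ 0 = 0`). -/
noncomputable def ent2 (x : ℝ) : ℝ := -(x * Real.logb 2 x)

/-- A POVM on `ℂ^M` with finite outcome set `A`. -/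
structure POVM (A : Type*) [Fintype A] (M : ℕ) where
  X : A → Matrix (Fin M) (Fin M) ℂ
  posSemidef : ∀ a : A, (X a).PosSemidef
  sum_one : ∑ a : A, X a = 1

/-- Eve's outcome probability `p(α|i)`. -/
noncomputable def pOut {N M : ℕ} {A : Type*} [Fintype A]
    (E : Bits N → Bits N → EuclideanSpace ℂ (Fin M)) (P : POVM A M) (a : A) (i : Bits N) : ℝ :=
  (∑ j : Bits N, ⟪E i j, Matrix.toEuclideanLin (P.X a) (E i j)⟫).re

/-- (base-2) Shannon mutual information of a joint distribution. -/
noncomputable def mutualInfo {S T : Type*} [Fintype S] [Fintype T] (p : S → T → ℝ) : ℝ :=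
  (∑ s, ent2 (∑ t, p s t)) + (∑ t, ent2 (∑ s, p s t)) - ∑ s, ∑ t, ent2 (p s t)

/-- Eve's information gain `I(A:E[X]|b)`. -/
noncomputable def infoGain {N M : ℕ} {A : Type*} [Fintype A]
    (E : Bits N → Bits N → EuclideanSpace ℂ (Fin M)) (P : POVM A M) : ℝ :=
  mutualInfo (fun (i : Bits N) (a : A) => (2 ^ N : ℝ)⁻¹ * pOut E P a i)

/-- Elementary tensor of two Euclidean-space vectors. -/
noncomputable def tens {α β : Type*} (u : EuclideanSpace ℂ α) (v : EuclideanSpace ℂ β) :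
    EuclideanSpace ℂ (α × β) :=
  (WithLp.equiv 2 ((α × β) → ℂ)).symm (fun p => u p.1 * v p.2)

/-- Symmetrized attack vectors. -/
noncomputable def Es {N M : ℕ} (E : Bits N → Bits N → EuclideanSpace ℂ (Fin M))
    (i j : Bits N) : EuclideanSpace ℂ (Bits N × Fin M) :=
  (((Real.sqrt (2 ^ N))⁻¹ : ℝ) : ℂ) •
    ∑ m : Bits N, ((-1 : ℂ) ^ bdot m (i + j)) • tens (EuclideanSpace.single m 1) (E (i + m) (j + m))

/-- The operator `|e_m⟩⟨e_m| ⊗ X` as a matrix on `ℂ^{2^N} ⊗ ℂ^M`. -/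
def projTens {N M : ℕ} (m : Bits N) (X : Matrix (Fin M) (Fin M) ℂ) :
    Matrix (Bits N × Fin M) (Bits N × Fin M) ℂ :=
  Matrix.of fun p q => (if p.1 = m ∧ q.1 = m then 1 else 0) * X p.2 q.2

/-- Purification vectors `φ_i`. -/
noncomputable def phi {N M : ℕ} (E : Bits N → Bits N → EuclideanSpace ℂ (Fin M))
    (i : Bits N) : EuclideanSpace ℂ ((Bits N × Fin M) × Bits N) :=
  ∑ j : Bits N, tens (Es E i j) (EuclideanSpace.single (i + j) 1)

/-- Rank-one projection `|ψ⟩⟨ψ|` as a matrix. -/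
noncomputable def outer {α : Type*} (ψ : EuclideanSpace ℂ α) : Matrix α α ℂ :=
  Matrix.of fun x y => ψ x * star (ψ y)

/-- Partial trace over the second tensor factor. -/
noncomputable def ptraceSnd {α β : Type*} [Fintype β] (Θ : Matrix (α × β) (α × β) ℂ) : Matrix α α ℂ :=
  Matrix.of fun i j => ∑ b : β, Θ (i, b) (j, b)

/-- Partial trace over the first tensor factor. -/
noncomputable def ptraceFst {α β : Type*} [Fintype α] (Θ : Matrix (α × β) (α × β) ℂ) : Matrix β β ℂ :=
  Matrix.of fun x y => ∑ a : α, Θ (a, x) (a, y)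

-- von Neumann entropy (base 2) of a Hermitian matrix (junk value `0` otherwise).
open Classical in
noncomputable def vN {n : Type*} [Fintype n] [DecidableEq n] (ρ : Matrix n n ℂ) : ℝ :=
  if h : ρ.IsHermitian then ∑ i, ent2 (h.eigenvalues i) else 0

/-- Classical–quantum state `∑ i p_i |e_i⟩⟨e_i| ⊗ ρ_i`. -/
def cqState {F G : Type*} [DecidableEq F] (p : F → ℝ) (ρ : F → Matrix G G ℂ) :
    Matrix (F × G) (F × G) ℂ :=
  Matrix.of fun x y => if x.1 = y.1 then (p x.1 : ℂ) * ρ x.1 x.2 y.2 else 0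

/-! ### Entropy inequalities -/

open Real in
/-- The quadratic lower bound `h₂(p) ≥ 4p(1-p)`, in natural units. On `[0, 1/2]` the difference `f` of
the two sides is concave up to an inflection point `r` and convex from there on. It vanishes
at `1/2` together with its derivative, so it is nonnegative on `[r, 1/2]`; as it also vanishes at
`0`, concavity gives nonnegativity on `[0, r]`. -/
lemma four_mul_le_binEntropy {p : ℝ} (h0 : 0 ≤ p) (h1 : p ≤ 1) :
    4 * log 2 * (p * (1 - p)) ≤ binEntropy p := by
  wlog hp : p ≤ 1 / 2 generalizing p
  · have := this (p := 1 - p) (by linarith) (by linarith) (by linarith)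
    rw [binEntropy_one_sub] at this
    linarith
  have hl : 0 < log 2 := log_pos (by norm_num)
  have hl1 : 1 / 2 < log 2 := by linarith [log_two_gt_d9]
  set f : ℝ → ℝ := fun p => binEntropy p - 4 * log 2 * (p * (1 - p)) with hf
  suffices 0 ≤ f p by simp only [hf] at this; linarith
  have hd : ∀ x ∈ Set.Ioo (0 : ℝ) 1,
      HasDerivAt f (log (1 - x) - log x - 4 * log 2 * (1 - 2 * x)) x := by
    intro x hx
    have h2 : HasDerivAt (fun x : ℝ => x * (1 - x)) (1 - 2 * x) x := by
      exact ((hasDerivAt_id x).mul ((hasDerivAt_id x).const_sub 1)).congr_deriv (by simp; ring)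
    exact (hasDerivAt_binEntropy hx.1.ne' hx.2.ne).sub (h2.const_mul _)
  have hd2 : ∀ x ∈ Set.Ioo (0 : ℝ) 1,
      HasDerivAt (fun x => log (1 - x) - log x - 4 * log 2 * (1 - 2 * x))
        (8 * log 2 - 1 / (x * (1 - x))) x := by
    intro x hx
    have hx0 : x ≠ 0 := hx.1.ne'
    have hx1 : 1 - x ≠ 0 := by linarith [hx.2]
    have a := ((hasDerivAt_id x).const_sub 1).log hx1
    have b := (hasDerivAt_id x).log hx0
    have c := (((hasDerivAt_id x).const_mul 2).const_sub 1).const_mul (4 * log 2)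
    refine ((a.sub b).sub c).congr_deriv ?_
    simp only [id]
    field_simp
    ring
  have hc : Continuous f := by fun_prop
  -- the inflection point of `f` in `[0, 1/2]`
  set r : ℝ := 1 / 2 - √(1 / 4 - 1 / (8 * log 2)) with hr
  have hq : 0 < 1 / 4 - 1 / (8 * log 2) := by
    rw [sub_pos, div_lt_div_iff₀ (by positivity) (by norm_num)]; linarith
  have hsq := Real.sq_sqrt hq.le
  have hs := Real.sqrt_pos.2 hq
  have hrr : r * (1 - r) = 1 / (8 * log 2) := by
    rw [hr]; linear_combination -hsq
  have hr12 : r < 1 / 2 := by linarith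
  have hr0 : 0 < r := by
    by_contra h
    have : r * (1 - r) ≤ 0 := mul_nonpos_of_nonpos_of_nonneg (not_lt.1 h) (by linarith)
    have : 0 < 1 / (8 * log 2) := by positivity
    linarith
  have hh : f (1 / 2) = 0 := by
    simp only [hf]
    rw [one_div, binEntropy_two_inv]; ring
  have hz : f 0 = 0 := by simp [hf]
  have key : ∀ q, r ≤ q → q ≤ 1 / 2 → 0 ≤ f q := by
    have hconv : ConvexOn ℝ (Set.Icc r (1 / 2)) f := by
      refine convexOn_of_hasDerivWithinAt2_nonneg (convex_Icc _ _) hc.continuousOn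
        (f' := fun x => log (1 - x) - log x - 4 * log 2 * (1 - 2 * x))
        (f'' := fun x => 8 * log 2 - 1 / (x * (1 - x))) ?_ ?_ ?_ <;>
        rw [interior_Icc] <;> intro x hx
      · exact (hd x ⟨hr0.trans hx.1, by linarith [hx.2]⟩).hasDerivWithinAt
      · exact (hd2 x ⟨hr0.trans hx.1, by linarith [hx.2]⟩).hasDerivWithinAt
      · have : r * (1 - r) ≤ x * (1 - x) := by nlinarith [hx.1, hx.2]
        have := one_div_le_one_div_of_le (by rw [hrr]; positivity) this
        rw [hrr, one_div_one_div] at this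
        linarith
    intro q hq1 hq2
    rcases hq2.eq_or_lt with rfl | hq2
    · exact hh.ge
    have hdd := hd (1 / 2) (by norm_num)
    have := hconv.slope_le_of_hasDerivAt (x := q) (y := 1 / 2) ⟨hq1, hq2.le⟩ ⟨hr12.le, le_rfl⟩ hq2 hdd
    rw [slope_def_field, hh, show log (1 - 1 / 2) - log (1 / 2) - 4 * log 2 * (1 - 2 * (1 / 2)) = 0 by
      norm_num, div_le_iff₀ (by linarith)] at this
    linarith
  rcases le_total r p with h | h
  · exact key p h hp
  · have hconc : ConcaveOn ℝ (Set.Icc 0 r) f := by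
      refine concaveOn_of_hasDerivWithinAt2_nonpos (convex_Icc _ _) hc.continuousOn
        (f' := fun x => log (1 - x) - log x - 4 * log 2 * (1 - 2 * x))
        (f'' := fun x => 8 * log 2 - 1 / (x * (1 - x))) ?_ ?_ ?_ <;>
        rw [interior_Icc] <;> intro x hx
      · exact (hd x ⟨hx.1, by linarith [hx.2]⟩).hasDerivWithinAt
      · exact (hd2 x ⟨hx.1, by linarith [hx.2]⟩).hasDerivWithinAt
      · have : x * (1 - x) ≤ r * (1 - r) := by nlinarith [hx.1, hx.2]
        have := one_div_le_one_div_of_le (mul_pos hx.1 (by linarith [hx.2])) this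
        rw [hrr, one_div_one_div] at this
        linarith
    have := hconc.min_le_of_mem_Icc (x := 0) (y := r) (z := p) ⟨le_rfl, hr0.le⟩ ⟨hr0.le, le_rfl⟩ ⟨h0, h⟩
    rw [hz, min_eq_left (key r le_rfl hr12.le)] at this
    exact this

lemma ent2_zero : ent2 0 = 0 := by simp [ent2]

/-- Log-sum inequality: `r ↦ ∑ i, ent2 (r i) - ent2 (∑ i, r i)` is superadditive on nonnegative
vectors. Equivalently, conditional entropy does not exceed entropy. -/
lemma ent2_superadd {K I : Type*} [Fintype K] [Fintype I] (r : K → I → ℝ)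
    (hr : ∀ k i, 0 ≤ r k i) :
    ∑ k, (∑ i, ent2 (r k i) - ent2 (∑ i, r k i)) ≤
      ∑ i, ent2 (∑ k, r k i) - ent2 (∑ k, ∑ i, r k i) := by
  set R : K → ℝ := fun k => ∑ i, r k i with hR
  set C : I → ℝ := fun i => ∑ k, r k i with hC
  set T : ℝ := ∑ k, R k with hT
  have hTC : ∑ i, C i = T := by rw [hT, hC, hR]; exact Finset.sum_comm
  have hl : 0 < Real.log 2 := Real.log_pos (by norm_num)
  have hR0 : ∀ k, 0 ≤ R k := fun k => Finset.sum_nonneg fun i _ => hr k i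
  have hC0 : ∀ i, 0 ≤ C i := fun i => Finset.sum_nonneg fun k _ => hr k i
  have hT0 : 0 ≤ T := Finset.sum_nonneg fun k _ => hR0 k
  -- Gibbs' inequality `log x ≤ x - 1` at each entry, comparing `r` with the product of its marginals
  have pt : ∀ k i, ent2 (r k i) ≤ -(r k i * Real.logb 2 (C i)) - r k i * Real.logb 2 (R k)
      + r k i * Real.logb 2 T + (C i * R k / T - r k i) / Real.log 2 := by
    intro k i
    rcases (hr k i).eq_or_lt with h | h
    · rw [← h, ent2_zero]
      have : 0 ≤ C i * R k / T / Real.log 2 := by have := hC0 i; have := hR0 k; positivity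
      simpa using this
    · have h1 : 0 < R k := h.trans_le (Finset.single_le_sum (fun i _ => hr k i) (Finset.mem_univ i))
      have h2 : 0 < C i := h.trans_le
        (Finset.single_le_sum (f := fun k => r k i) (fun k _ => hr k i) (Finset.mem_univ k))
      have h3 : 0 < T := h1.trans_le (Finset.single_le_sum (fun i _ => hR0 i) (Finset.mem_univ k))
      have g := Real.log_le_sub_one_of_pos (x := C i * R k / T / r k i) (by positivity)
      rw [Real.log_div (by positivity) h.ne', Real.log_div (by positivity) h3.ne',
        Real.log_mul h2.ne' h1.ne'] at g
      have g2 := mul_le_mul_of_nonneg_left g h.le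
      rw [mul_sub_one, mul_div_cancel₀ _ h.ne'] at g2
      simp only [ent2, Real.logb]
      rw [← sub_nonneg]
      have : 0 ≤ (C i * R k / T - r k i - r k i * (Real.log (C i) + Real.log (R k) - Real.log T
        - Real.log (r k i))) / Real.log 2 := div_nonneg (by linarith) hl.le
      convert this using 1
      ring
  have hs := Finset.sum_le_sum fun k (_ : k ∈ Finset.univ) =>
    Finset.sum_le_sum fun i (_ : i ∈ Finset.univ) => pt k i
  simp only [Finset.sum_add_distrib, Finset.sum_sub_distrib, ← Finset.sum_div, ← Finset.sum_mul,
    ← Finset.mul_sum, Finset.sum_neg_distrib] at hs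
  have e1 : ∑ k, ∑ i, r k i * Real.logb 2 (C i) = ∑ i, C i * Real.logb 2 (C i) := by
    rw [Finset.sum_comm]; simp only [← Finset.sum_mul, hC]
  have e2 : (∑ i, C i) * (∑ k, R k) / T = T := by
    rw [hTC, ← hT]
    by_cases h : T = 0
    · simp [h]
    · field_simp
  simp only [Finset.sum_sub_distrib, ent2, Finset.sum_neg_distrib]
  simp only [ent2, Finset.sum_neg_distrib] at hs
  change _ ≤ - ∑ k, ∑ i, _ - ∑ k, R k * _ + (∑ k, R k) * _ + (_ - ∑ k, R k) / _ at hs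
  rw [e1, e2, ← hT] at hs
  simp only [sub_self, zero_div] at hs
  change _ - -∑ k, R k * Real.logb 2 (R k) ≤ -∑ i, C i * Real.logb 2 (C i) - _
  linarith

/-- The homogeneous form of `four_mul_le_binEntropy`. -/
lemma binary_bound {a b : ℝ} (ha : 0 ≤ a) (hb : 0 ≤ b) :
    4 * a * b / (a + b) + ent2 (a + b) ≤ ent2 a + ent2 b := by
  have hl : 0 < Real.log 2 := Real.log_pos (by norm_num)
  rcases ha.eq_or_lt with rfl | ha
  · simp [ent2_zero]
  rcases hb.eq_or_lt with rfl | hb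
  · simp [ent2_zero]
  have hT : 0 < a + b := by positivity
  have h := four_mul_le_binEntropy (p := a / (a + b)) (by positivity)
    (by rw [div_le_one hT]; linarith)
  rw [Real.binEntropy_eq_negMulLog_add_negMulLog_one_sub,
    show 1 - a / (a + b) = b / (a + b) by field_simp; ring] at h
  simp only [Real.negMulLog, Real.log_div ha.ne' hT.ne', Real.log_div hb.ne' hT.ne'] at h
  have h2 := mul_le_mul_of_nonneg_left h (by positivity : 0 ≤ (a + b) / Real.log 2)
  rw [← sub_nonneg] at h2 ⊢
  refine h2.trans_eq ?_
  simp only [ent2, Real.logb]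
  field_simp
  ring

/-- Two binary distributions of mass `T` whose biases `A - B`, `C - D` lie in the disc of radius `T`
have total normalized entropy at least one bit. -/
lemma two_point {A B C D T : ℝ} (hA : 0 ≤ A) (hB : 0 ≤ B) (hC : 0 ≤ C) (hD : 0 ≤ D)
    (h1 : A + B = T) (h2 : C + D = T) (h : (A - B) ^ 2 + (C - D) ^ 2 ≤ T ^ 2) :
    T + 2 * ent2 T ≤ ent2 A + ent2 B + (ent2 C + ent2 D) := by
  have x := binary_bound hA hB
  have y := binary_bound hC hD
  rw [h1] at x
  rw [h2] at y
  have hT : 0 ≤ T := by linarith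
  have : T ≤ 4 * A * B / T + 4 * C * D / T := by
    rcases hT.eq_or_lt with rfl | hT
    · simp
    rw [← add_div, le_div_iff₀ hT]
    nlinarith
  linarith

/-! ### The Fourier transform on bit strings -/

lemma sum_zmod_two {V : Type*} [AddCommMonoid V] (f : ZMod 2 → V) : ∑ a, f a = f 0 + f 1 :=
  Fin.sum_univ_two f

lemma sum_bits_succ {N : ℕ} {V : Type*} [AddCommMonoid V] (f : Bits (N + 1) → V) :
    ∑ x, f x = ∑ y : Bits N, f (Fin.cons 0 y) + ∑ y : Bits N, f (Fin.cons 1 y) := by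
  rw [← (Fin.consEquiv (fun _ => ZMod 2)).sum_comp, Fintype.sum_prod_type, sum_zmod_two]
  rfl

/-- The character `i ↦ (-1)^{c·i}` of the group of bit strings. -/
noncomputable def chi {N : ℕ} (c i : Bits N) : ℂ := (-1) ^ bdot c i

lemma bdot_comm {N : ℕ} (c i : Bits N) : bdot c i = bdot i c := by
  simp [bdot, mul_comm]

lemma chi_add_right {N : ℕ} (c i j : Bits N) : chi c (i + j) = chi c i * chi c j := by
  simp only [chi, bdot, ← Finset.prod_pow_eq_pow_sum, ← Finset.prod_mul_distrib]
  refine Finset.prod_congr rfl fun n _ => ?_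
  have h : ∀ a b d : ZMod 2,
      ((-1 : ℤ) ^ (a.val * (b + d).val)) = (-1) ^ (a.val * b.val) * (-1) ^ (a.val * d.val) := by
    decide
  exact_mod_cast congrArg (Int.cast : ℤ → ℂ) (h (c n) (i n) (j n))

lemma chi_add_left {N : ℕ} (c d i : Bits N) : chi (c + d) i = chi c i * chi d i := by
  simp only [chi, bdot_comm _ i]
  exact chi_add_right i c d

lemma chi_mul_self {N : ℕ} (c i : Bits N) : chi c i * chi c i = 1 := by
  rw [chi, ← mul_pow]; simp

lemma chi_cons {N : ℕ} (a b : ZMod 2) (c i : Bits N) :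
    chi (Fin.cons a c : Bits (N + 1)) (Fin.cons b i) = (-1) ^ (a.val * b.val) * chi c i := by
  simp [chi, bdot, Fin.sum_univ_succ, pow_add]

section Fourier
variable {V : Type*} [NormedAddCommGroup V] [InnerProductSpace ℂ V]

/-- The unnormalized vector-valued Fourier transform `c ↦ ∑_i (-1)^{c·i} f i`. -/
noncomputable def ft {N : ℕ} (f : Bits N → V) (c : Bits N) : V := ∑ i, chi c i • f i

lemma ft_cons_zero {N : ℕ} (f : Bits (N + 1) → V) (c : Bits N) :
    ft f (Fin.cons 0 c : Bits (N + 1)) =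
      ft (fun i => f (Fin.cons 0 i)) c + ft (fun i => f (Fin.cons 1 i)) c := by
  simp [ft, sum_bits_succ, chi_cons]

lemma ft_cons_one {N : ℕ} (f : Bits (N + 1) → V) (c : Bits N) :
    ft f (Fin.cons 1 c : Bits (N + 1)) =
      ft (fun i => f (Fin.cons 0 i)) c - ft (fun i => f (Fin.cons 1 i)) c := by
  simp [ft, sum_bits_succ, chi_cons, ZMod.val_one, sub_eq_add_neg]

lemma parallelogram_sq (u v : V) : ‖u + v‖ ^ 2 + ‖u - v‖ ^ 2 = 2 * (‖u‖ ^ 2 + ‖v‖ ^ 2) := by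
  have := parallelogram_law_with_norm ℂ u v
  simp only [sq]; linarith

lemma parseval : ∀ {N : ℕ} (f : Bits N → V), ∑ c, ‖ft f c‖ ^ 2 = 2 ^ N * ∑ i, ‖f i‖ ^ 2
  | 0, f => by simp [ft, chi, bdot]
  | N + 1, f => by
    rw [sum_bits_succ, sum_bits_succ, ← Finset.sum_add_distrib]
    simp only [ft_cons_zero, ft_cons_one, parallelogram_sq, ← Finset.mul_sum,
      Finset.sum_add_distrib, parseval]
    ring

end Fourier

lemma two_point_complex {s : ℝ} (hs : 0 ≤ s) (u v : ℂ) :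
    (s * ‖u‖ ^ 2 + s * ‖v‖ ^ 2) + 2 * ent2 (s * ‖u‖ ^ 2 + s * ‖v‖ ^ 2) ≤
      ent2 (s * ‖u‖ ^ 2) + ent2 (s * ‖v‖ ^ 2) +
        (ent2 (s / 2 * ‖u + v‖ ^ 2) + ent2 (s / 2 * ‖u - v‖ ^ 2)) := by
  refine two_point (by positivity) (by positivity) (by positivity) (by positivity) rfl
    (by linear_combination (s / 2) * parallelogram_sq u v) ?_
  simp only [Complex.sq_norm, Complex.normSq_apply, Complex.add_re, Complex.add_im,
    Complex.sub_re, Complex.sub_im]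
  nlinarith [sq_nonneg (s * (u.re * v.im - u.im * v.re))]

/-- Entropic uncertainty relation for the Fourier transform on `𝔽₂^N`, in homogeneous form: with
`T = s‖f‖²`, the normalized entropies of `s|f|²` and of `s 2^{-N}|f̂|²` add up to at least `N` bits.

The induction splits off the first bit. The hypothesis, applied to the two halves `f₀, f₁` of `f`,
transforms the remaining bits; the two-point relation, applied at each frequency of these, then
transforms the first bit. The entropy of the half-transformed function enters twice and is
bounded, through `ent2_superadd`, by the entropies of its marginals. -/
theorem uncertainty : ∀ {N : ℕ} {s : ℝ} (_ : 0 ≤ s) (f : Bits N → ℂ),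
    N * (∑ i, s * ‖f i‖ ^ 2) + 2 * ent2 (∑ i, s * ‖f i‖ ^ 2) ≤
      ∑ i, ent2 (s * ‖f i‖ ^ 2) + ∑ c, ent2 (s / 2 ^ N * ‖ft f c‖ ^ 2)
  | 0, s, hs, f => by simp [ft, chi, bdot, two_mul]
  | N + 1, s, hs, f => by
    set f₀ : Bits N → ℂ := fun i => f (Fin.cons 0 i) with hf₀
    set f₁ : Bits N → ℂ := fun i => f (Fin.cons 1 i) with hf₁
    have h₀ := uncertainty hs f₀
    have h₁ := uncertainty hs f₁
    set T₀ := ∑ i, s * ‖f₀ i‖ ^ 2 with hT₀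
    set T₁ := ∑ i, s * ‖f₁ i‖ ^ 2 with hT₁
    have hs' : 0 ≤ s / 2 ^ N := by positivity
    have par : ∀ g : Bits N → ℂ, ∑ c, s / 2 ^ N * ‖ft g c‖ ^ 2 = ∑ i, s * ‖g i‖ ^ 2 := by
      intro g
      rw [← Finset.mul_sum, ← Finset.mul_sum, parseval]
      field_simp
    have h2 := Finset.sum_le_sum fun c (_ : c ∈ Finset.univ) =>
      two_point_complex hs' (ft f₀ c) (ft f₁ c)
    simp only [Finset.sum_add_distrib] at h2
    rw [par, par, ← hT₀, ← hT₁, ← Finset.mul_sum] at h2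
    have h3 := ent2_superadd (fun (a : Fin 2) c => s / 2 ^ N * ‖ft (![f₀, f₁] a) c‖ ^ 2)
      (fun _ _ => by positivity)
    simp only [Fin.sum_univ_two, Matrix.cons_val_zero, Matrix.cons_val_one, par, ← hT₀, ← hT₁] at h3
    rw [sum_bits_succ, sum_bits_succ, sum_bits_succ]
    simp only [ft_cons_zero, ft_cons_one]
    rw [show s / 2 ^ (N + 1) = s / 2 ^ N / 2 by rw [pow_succ]; field_simp]
    push_cast
    change (N + 1) * (T₀ + T₁) + 2 * ent2 (T₀ + T₁) ≤
      ∑ i, ent2 (s * ‖f₀ i‖ ^ 2) + ∑ i, ent2 (s * ‖f₁ i‖ ^ 2) + _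
    linarith

/-! ### Eve's measurement and Bob's error distribution -/

open scoped MatrixOrder in
lemma exists_conjTranspose_mul_self {M : ℕ} {X : Matrix (Fin M) (Fin M) ℂ} (hX : X.PosSemidef) :
    ∃ B : Matrix (Fin M) (Fin M) ℂ, X = B.conjTranspose * B := by
  have := Matrix.nonneg_iff_posSemidef.2 hX
  refine ⟨CFC.sqrt X, ?_⟩
  have h := CFC.sqrt_mul_sqrt_self X
  have h2 := (CFC.sqrt_nonneg X).isSelfAdjoint
  rw [← Matrix.star_eq_conjTranspose, h2.star_eq, h]

lemma inner_conjTranspose_mul_self {M : ℕ} (B : Matrix (Fin M) (Fin M) ℂ)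
    (v : EuclideanSpace ℂ (Fin M)) :
    ⟪v, Matrix.toEuclideanLin (B.conjTranspose * B) v⟫ =
      ((∑ x, ‖Matrix.toEuclideanLin B v x‖ ^ 2 : ℝ) : ℂ) := by
  have : Matrix.toEuclideanLin (B.conjTranspose * B) v =
      Matrix.toEuclideanLin B.conjTranspose (Matrix.toEuclideanLin B v) := by
    simp [Matrix.toLpLin_apply, Matrix.mulVec_mulVec]
  rw [this, Matrix.toEuclideanLin_conjTranspose_eq_adjoint, LinearMap.adjoint_inner_right,
    inner_self_eq_norm_sq_to_K, ← EuclideanSpace.norm_sq_eq]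
  norm_num

/-- Completeness of the POVM `B_α† B_α`. -/
lemma sum_norm_sq_kraus {M : ℕ} {A : Type*} [Fintype A] {B : A → Matrix (Fin M) (Fin M) ℂ}
    (hB : ∑ a, (B a).conjTranspose * B a = 1) (v : EuclideanSpace ℂ (Fin M)) :
    ∑ a, ∑ x, ‖Matrix.toEuclideanLin (B a) v x‖ ^ 2 = ‖v‖ ^ 2 := by
  have h : ⟪v, Matrix.toEuclideanLin (∑ a, (B a).conjTranspose * B a) v⟫ = ((‖v‖ ^ 2 : ℝ) : ℂ) := by
    rw [hB, Matrix.toLpLin_apply, Matrix.one_mulVec]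
    change ⟪v, v⟫ = _
    rw [inner_self_eq_norm_sq_to_K]; norm_num
  rw [map_sum, LinearMap.sum_apply, inner_sum] at h
  simp only [inner_conjTranspose_mul_self] at h
  exact_mod_cast h

/-- Substituting `j = i + e`, the conjugate-basis vector becomes an iterated Fourier transform: over
`i` at frequency `c`, and over the error `e`. -/
lemma Ebar_eq {N M : ℕ} (E : Bits N → Bits N → EuclideanSpace ℂ (Fin M)) (l c : Bits N) :
    Ebar E l (l + c) = (2 ^ N : ℂ)⁻¹ •
      ft (fun e => chi c e • ft (fun i => E i (i + e)) c) l := by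
  unfold Ebar
  congr 1
  simp only [ft, Finset.smul_sum, smul_smul]
  rw [Finset.sum_comm (s := (Finset.univ : Finset (Bits N))) (t := (Finset.univ : Finset (Bits N)))
    (f := fun e i => (chi l e * (chi c e * chi c i)) • E i (i + e))]
  refine Finset.sum_congr rfl fun i _ => ?_
  rw [← Equiv.sum_comp (Equiv.addLeft i)]
  refine Finset.sum_congr rfl fun e _ => ?_
  simp only [Equiv.coe_addLeft, pow_add]
  rw [bdot_comm i l]
  congr 1
  change chi (l + c) (i + e) * chi l i = _
  rw [chi_add_left, chi_add_right, chi_add_right]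
  linear_combination (chi l e * chi c i * chi c e) * chi_mul_self l i

lemma norm_chi {N : ℕ} (c i : Bits N) : ‖chi c i‖ = 1 := by simp [chi]

/-- Bob's conjugate error distribution after applying Parseval's identity to the error variable. -/
lemma pbar_eq {N M : ℕ} (E : Bits N → Bits N → EuclideanSpace ℂ (Fin M)) (c : Bits N) :
    pbar E c = (2 ^ N : ℝ)⁻¹ / 2 ^ N * ∑ e, ‖ft (fun i => E i (i + e)) c‖ ^ 2 := by
  unfold pbar
  simp only [Ebar_eq, norm_smul, mul_pow, ← Finset.mul_sum, parseval, norm_chi]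
  simp
  field_simp

/-! ### The information–disturbance bound -/

/-- Information–disturbance theorem: Eve's information gain in basis `b` is bounded by the
Shannon entropy of Bob's conjugate-basis error distribution. -/
theorem information_disturbance {N M : ℕ} (hN : 1 ≤ N) {A : Type*} [Fintype A]
    (E : Bits N → Bits N → EuclideanSpace ℂ (Fin M)) (hE : Attack E) (P : POVM A M) :
    infoGain E P ≤ ∑ c : Bits N, ent2 (pbar E c) := by
  choose B hB using fun a => exists_conjTranspose_mul_self (P.posSemidef a)
  have hB1 : ∑ a, (B a).conjTranspose * B a = 1 := by
    rw [← P.sum_one]; exact Finset.sum_congr rfl fun a _ => (hB a).symm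
  set s : ℝ := (2 ^ N)⁻¹ with hs
  have hs0 : 0 ≤ s := by positivity
  have hE1 : ∀ i, ∑ j, ‖E i j‖ ^ 2 = 1 := by
    intro i
    have h := hE i i
    rw [if_pos rfl] at h
    have h' := congrArg RCLike.re h
    rw [map_sum, RCLike.one_re] at h'
    simpa only [inner_self_eq_norm_sq] using h'
  let W : A → Bits N × Fin M → Bits N → ℂ := fun a k i =>
    Matrix.toEuclideanLin (B a) (E i (i + k.1)) k.2
  let p : A → Bits N × Fin M → Bits N → ℝ := fun a k i => s * ‖W a k i‖ ^ 2
  let q : A → Bits N × Fin M → Bits N → ℝ := fun a k c => s / 2 ^ N * ‖ft (W a k) c‖ ^ 2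
  have hp0 : ∀ a k i, 0 ≤ p a k i := fun a k i => by positivity
  have hq0 : ∀ a k i, 0 ≤ q a k i := fun a k i => by positivity
  have hpOut : ∀ a i, s * pOut E P a i = ∑ k, p a k i := by
    intro a i
    simp only [p, ← Finset.mul_sum, Fintype.sum_prod_type, W, pOut, hB,
      inner_conjTranspose_mul_self]
    rw [← Complex.ofReal_sum, Complex.ofReal_re, ← Equiv.sum_comp (Equiv.addLeft i)]
    rfl
  have hftW : ∀ a k c, ft (W a k) c =
      Matrix.toEuclideanLin (B a) (ft (fun i => E i (i + k.1)) c) k.2 := by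
    intro a k c
    simp [ft, W, map_sum, map_smul]
  have hpbar : ∀ c, ∑ a, ∑ k, q a k c = pbar E c := by
    intro c
    simp only [q, hftW, ← Finset.mul_sum, pbar_eq, Fintype.sum_prod_type]
    rw [Finset.sum_comm]
    simp only [sum_norm_sq_kraus hB1]
    rfl
  have hpi : ∀ i, ∑ a, ∑ k, p a k i = s := by
    intro i
    simp only [p, W, ← Finset.mul_sum, Fintype.sum_prod_type]
    rw [Finset.sum_comm]
    simp only [sum_norm_sq_kraus hB1]
    rw [show ∑ e, ‖E i (i + e)‖ ^ 2 = ∑ j, ‖E i j‖ ^ 2 from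
      Equiv.sum_comp (Equiv.addLeft i) fun j => ‖E i j‖ ^ 2, hE1, mul_one]
  have hpq : ∀ a k, ∑ c, q a k c = ∑ i, p a k i := by
    intro a k
    simp only [q, p, ← Finset.mul_sum, parseval]
    field_simp
  have hpt : ∑ a, ∑ k, ∑ i, p a k i = 1 := by
    have : ∑ a, ∑ k, ∑ i, p a k i = ∑ i, ∑ a, ∑ k, p a k i :=
      (Finset.sum_congr rfl fun a _ => Finset.sum_comm).trans Finset.sum_comm
    rw [this]
    simp [hpi, hs]
  -- forgetting the fine outcome `k` can only decrease the information about `i`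
  have h1 : ∀ a, ∑ k, (∑ i, ent2 (p a k i) - ent2 (∑ i, p a k i)) ≤
      ∑ i, ent2 (∑ k, p a k i) - ent2 (∑ k, ∑ i, p a k i) := fun a => ent2_superadd _ (hp0 a)
  have h2 : ∀ a k, N * (∑ i, p a k i) + 2 * ent2 (∑ i, p a k i) ≤
      ∑ i, ent2 (p a k i) + ∑ c, ent2 (q a k c) := fun a k => uncertainty hs0 (W a k)
  -- the distributions `q a k` mix to `pbar`, whose entropy dominates the mean entropy of the `q a k`
  have h3 : ∑ a, ∑ k, (∑ c, ent2 (q a k c) - ent2 (∑ c, q a k c)) ≤ ∑ c, ent2 (pbar E c) := by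
    have := ent2_superadd (fun (ak : A × (Bits N × Fin M)) c => q ak.1 ak.2 c)
      (fun ak c => hq0 _ _ _)
    rw [Fintype.sum_prod_type, Fintype.sum_prod_type] at this
    simp only [Fintype.sum_prod_type (f := fun ak : A × (Bits N × Fin M) => q ak.1 ak.2 _),
      hpbar, hpq, hpt] at this ⊢
    simpa [ent2] using this
  have h4 : ∑ _i : Bits N, ent2 s = N := by
    simp [ent2, hs, Real.logb_pow]
  have h12 : ∀ a, N * (∑ k, ∑ i, p a k i) ≤ (∑ i, ent2 (∑ k, p a k i) - ent2 (∑ k, ∑ i, p a k i))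
      + ∑ k, (∑ c, ent2 (q a k c) - ent2 (∑ c, q a k c)) := by
    intro a
    refine le_trans ?_ (add_le_add_left (h1 a) _)
    rw [← Finset.sum_add_distrib, Finset.mul_sum]
    refine Finset.sum_le_sum fun k _ => ?_
    rw [hpq]
    linarith [h2 a k]
  have h5 := Finset.sum_le_sum fun a (_ : a ∈ Finset.univ) => h12 a
  rw [Finset.sum_add_distrib, ← Finset.mul_sum, hpt, Finset.sum_sub_distrib] at h5
  have hinfo : infoGain E P = N + ∑ a, ent2 (∑ k, ∑ i, p a k i)
      - ∑ a, ∑ i, ent2 (∑ k, p a k i) := by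
    simp only [infoGain, mutualInfo, ← hs, hpOut, hpi, h4]
    rw [Finset.sum_comm (f := fun i a => ent2 (∑ k, p a k i))]
    simp only [Finset.sum_comm (f := fun i k => p _ k i)]
  linarith

end IDT
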